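/- For every E ∈ ℝ and every ε > 0, there exists K = K(E,ε) such that for every integer k > K and every x ∈ ℝ, |P_k(x,E)| < e^{(L(E)+ε)k}. -/

import Mathlib

open scoped Real

/-- The quasi-periodic potential `v(x) = 2λcos(2πx)/(1 - αcos(2πx))`. -/
noncomputable def potV (α lam : ℝ) (x : ℝ) : ℝ :=
  2 * lam * Real.cos (2 * Real.pi * x) / (1 - α * Real.cos (2 * Real.pi * x))

/-- One-step transfer matrix `A(x,z) = [[z - V x, -1],[1,0]]`. -/
noncomputable def tMat (V : ℝ → ℝ) (x : ℝ) (z : ℂ) : Matrix (Fin 2) (Fin 2) ℂ :=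
  !![z - (V x : ℝ), -1; 1, 0]

/-- The `n`-step transfer matrix `A_n(x,z) = A(x+(n-1)b,z) ⋯ A(x+b,z) A(x,z)`. -/
noncomputable def tProd (V : ℝ → ℝ) (b : ℝ) (n : ℕ) (x : ℝ) (z : ℂ) :
    Matrix (Fin 2) (Fin 2) ℂ :=
  (((List.range n).reverse).map (fun j => tMat V (x + (j : ℝ) * b) z)).prod

/-- The operator norm of a 2×2 complex matrix, acting on the Euclidean space `ℂ²`. -/
noncomputable def opNorm2 (M : Matrix (Fin 2) (Fin 2) ℂ) : ℝ :=
  ‖Matrix.toEuclideanCLM (𝕜 := ℂ) M‖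

/-- The Lyapunov exponent `L(z) = lim_n (1/n)∫₀¹ log‖A_n(x,z)‖ dx`; the limit exists and
equals `inf_{n ≥ 1} (1/n)∫₀¹ log‖A_n(x,z)‖ dx` by subadditivity, so we take that as the
definition. -/
noncomputable def lyap (V : ℝ → ℝ) (b : ℝ) (z : ℂ) : ℝ :=
  ⨅ n : ℕ+, ((n : ℝ))⁻¹ * ∫ x in (0:ℝ)..(1:ℝ), Real.log (opNorm2 (tProd V b n x z))

/-- The `k×k` tridiagonal matrix with diagonal entries `E - V(x+jb)`, `j = 0,…,k-1`, and
entries `-1` on the two adjacent diagonals. -/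
noncomputable def Pmat (V : ℝ → ℝ) (b : ℝ) (k : ℕ) (x : ℝ) (E : ℝ) :
    Matrix (Fin k) (Fin k) ℝ :=
  fun i j =>
    if i = j then E - V (x + (i : ℝ) * b)
    else if (i : ℤ) = (j : ℤ) + 1 ∨ (j : ℤ) = (i : ℤ) + 1 then -1 else 0

/-- `P_k(x,E)`, the determinant of the box restriction `(H - E)|_{[0,k-1]}`. -/
noncomputable def Pdet (V : ℝ → ℝ) (b : ℝ) (k : ℕ) (x : ℝ) (E : ℝ) : ℝ :=
  (Pmat V b k x E).det

/-!
The determinant `P_k` is the upper left entry of the transfer matrix `A_k`, since both satisfy the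
three-term recursion obtained by expanding along the first row; hence `|P_k| ≤ ‖A_k‖`. The functions
`log ‖A_n‖` form a subadditive cocycle over the rotation by `b`. Choose a block length `m` for which
`(1/m) ∫ log ‖A_m‖` is close to `L`, and cut `{0, …, k - 1}` into blocks of length `m`: up to a
bounded remainder, `log ‖A_k‖` is at most a Birkhoff sum of `log ‖A_m‖` over the rotation by `m b`.
By Weyl equidistribution the Birkhoff averages of a continuous function converge uniformly to its
mean, which makes the bound uniform in `x`. Equidistribution itself holds for characters, as these
are eigenvectors of the Koopman operator, and passes to all continuous functions by density.
-/

open Filter Topology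

section MeanErgodic

variable {𝕜 E : Type*} [RCLike 𝕜] [NormedAddCommGroup E] [NormedSpace 𝕜 E]

theorem tendsto_birkhoffAverage_of_eigenvector {U : E →ₗ[𝕜] E} (hU : LipschitzWith 1 U) {w : 𝕜}
    (hw : w ≠ 1) {x : E} (hx : U x = w • x) :
    Tendsto (birkhoffAverage 𝕜 U id · x) atTop (𝓝 0) := by
  have horbit : Bornology.IsBounded (Set.range (id <| U^[·] x)) := by
    refine isBounded_iff_forall_norm_le.2 ⟨‖x‖, Set.forall_mem_range.2 fun n => ?_⟩
    simpa [iterate_map_zero] using (hU.iterate n).dist_le_mul x 0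
  have hdiff (n : ℕ) : birkhoffAverage 𝕜 U id n x =
      (w - 1)⁻¹ • (birkhoffAverage 𝕜 U id n (U x) - birkhoffAverage 𝕜 U id n x) := by
    have hmul : birkhoffAverage 𝕜 U id n (U x) = w • birkhoffAverage 𝕜 U id n x := by
      simp [hx, birkhoffAverage, birkhoffSum, ← Module.End.pow_apply, Finset.smul_sum, smul_comm w]
    rw [hmul, eq_inv_smul_iff₀ (sub_ne_zero.2 hw), sub_smul, one_smul]
  simpa [← hdiff] using
    (tendsto_birkhoffAverage_apply_sub_birkhoffAverage 𝕜 horbit).const_smul (w - 1)⁻¹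

theorem tendsto_birkhoffAverage_of_dense_span {U : E →ₗ[𝕜] E} (hU : LipschitzWith 1 U)
    (P : E →L[𝕜] E) {s : Set E} (hs : (Submodule.span 𝕜 s).topologicalClosure = ⊤)
    (h : ∀ x ∈ s, Tendsto (birkhoffAverage 𝕜 U id · x) atTop (𝓝 (P x))) (x : E) :
    Tendsto (birkhoffAverage 𝕜 U id · x) atTop (𝓝 (P x)) := by
  let S : Submodule 𝕜 E :=
    { carrier := {x | Tendsto (birkhoffAverage 𝕜 U id · x) atTop (𝓝 (P x))}
      add_mem' := fun {x y} hx hy => by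
        simpa [birkhoffAverage, birkhoffSum, ← Module.End.pow_apply, Finset.sum_add_distrib]
          using hx.add hy
      zero_mem' := by
        simp [birkhoffAverage, birkhoffSum, ← Module.End.pow_apply]
      smul_mem' := fun a x hx => by
        simpa [birkhoffAverage, birkhoffSum, ← Module.End.pow_apply, ← Finset.smul_sum,
          smul_comm a] using hx.const_smul a }
  have hclosed : IsClosed (S : Set E) :=
    isClosed_setOfPred_tendsto_birkhoffAverage 𝕜 hU uniformContinuous_id P.continuous
  have htop : (⊤ : Submodule 𝕜 E) ≤ S :=
    hs ▸ Submodule.topologicalClosure_minimal _ (Submodule.span_le.2 h) hclosed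
  exact htop (Submodule.mem_top (x := x))

end MeanErgodic

section Koopman

variable {X : Type*} [TopologicalSpace X]

/-- The Koopman operator `G ↦ G ∘ T` on the continuous functions of a space, for a
continuous self-map `T`. -/
noncomputable def koopman (T : C(X, X)) :
    C(X, ℂ) →ₗ[ℂ] C(X, ℂ) :=
  (ContinuousMap.compRightAlgHom ℂ ℂ T).toLinearMap

lemma lipschitzWith_koopman [CompactSpace X] (T : C(X, X)) :
    LipschitzWith 1 (koopman T) :=
  LipschitzWith.of_dist_le_mul fun F G => by
    simpa using (ContinuousMap.dist_le dist_nonneg).2 fun x =>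
      ContinuousMap.dist_apply_le_dist (f := F) (g := G) (T x)

lemma birkhoffAverage_koopman_apply (T : C(X, X)) (G : C(X, ℂ))
    (n : ℕ) (x : X) :
    birkhoffAverage ℂ (koopman T) id n G x = birkhoffAverage ℂ T G n x := by
  have hiter (i : ℕ) : ((koopman T)^[i] G) x = G (T^[i] x) := by
    induction i generalizing x with
    | zero => rfl
    | succ i ih => rw [Function.iterate_succ_apply', Function.iterate_succ_apply]; exact ih (T x)
  simp [birkhoffAverage, birkhoffSum, hiter]

end Koopman

section IrrationalRotation

variable {T : ℝ} [Fact (0 < T)]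

/-- The operator on `C(AddCircle T, ℂ)` replacing a function by the constant
function equal to its Haar mean. -/
noncomputable def haarMean : C(AddCircle T, ℂ) →L[ℂ] C(AddCircle T, ℂ) :=
  ((MeasureTheory.L1.integralCLM' ℂ).comp
    (ContinuousMap.toLp 1 AddCircle.haarAddCircle ℂ)).smulRight 1

lemma haarMean_apply (G : C(AddCircle T, ℂ)) (x : AddCircle T) :
    haarMean G x = ∫ t, G t ∂AddCircle.haarAddCircle := by
  have hG : haarMean G x = ∫ t, ContinuousMap.toLp 1 AddCircle.haarAddCircle ℂ G t
      ∂AddCircle.haarAddCircle := by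
    simp [haarMean, ← MeasureTheory.L1.integral_eq', MeasureTheory.L1.integral_eq_integral]
  rw [hG, MeasureTheory.integral_congr_ae (ContinuousMap.coeFn_toLp _ G)]

lemma integral_fourier (n : ℤ) :
    ∫ t : AddCircle T, fourier n t ∂AddCircle.haarAddCircle = if n = 0 then 1 else 0 := by
  have h := congrFun (fourierCoeff_fourier (T := T) n) 0
  simpa [fourierCoeff, Pi.single_apply, eq_comm] using h

lemma fourier_ne_one {c : AddCircle T} (hc : ¬ IsOfFinAddOrder c) {n : ℤ} (hn : n ≠ 0) :
    fourier n c ≠ 1 := by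
  rw [fourier_apply, ← Circle.coe_one, Ne, Circle.coe_inj, ← AddCircle.toCircle_zero (T := T),
    (AddCircle.injective_toCircle (Fact.out : 0 < T).ne').eq_iff]
  exact fun h => hc (isOfFinAddOrder_iff_zsmul_eq_zero.2 ⟨n, hn, h⟩)

theorem tendsto_birkhoffAverage_koopman_addRight {c : AddCircle T} (hc : ¬ IsOfFinAddOrder c)
    (G : C(AddCircle T, ℂ)) :
    Tendsto (birkhoffAverage ℂ (koopman (ContinuousMap.addRight c)) id · G) atTop
      (𝓝 (haarMean G)) := by
  have hU := lipschitzWith_koopman (ContinuousMap.addRight c)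
  have heigen (n : ℤ) :
      koopman (ContinuousMap.addRight c) (fourier n) = fourier n c • fourier n := by
    ext x
    simp [koopman, AddCircle.toCircle_add, mul_comm]
  refine tendsto_birkhoffAverage_of_dense_span hU haarMean span_fourier_closure_eq_top ?_ G
  rintro _ ⟨n, rfl⟩
  have hmean : haarMean (fourier n : C(AddCircle T, ℂ)) = if n = 0 then 1 else 0 := by
    ext x
    rw [haarMean_apply, integral_fourier]
    split_ifs <;> rfl
  rw [hmean]
  split_ifs with hn
  · have hone : (fourier n : C(AddCircle T, ℂ)) = 1 := by ext; simp [hn]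
    have hfix :
        Function.IsFixedPt (koopman (ContinuousMap.addRight c)) (1 : C(AddCircle T, ℂ)) := by
      ext; simp [koopman]
    exact hone ▸ hfix.tendsto_birkhoffAverage ℂ id
  · exact tendsto_birkhoffAverage_of_eigenvector hU (fourier_ne_one hc hn) (heigen n)

theorem tendstoUniformly_birkhoffAverage_addRight {c : AddCircle T} (hc : ¬ IsOfFinAddOrder c)
    (G : C(AddCircle T, ℂ)) :
    TendstoUniformly (birkhoffAverage ℂ (· + c) G)
      (fun _ => ∫ t, G t ∂AddCircle.haarAddCircle) atTop := by
  have h := ContinuousMap.tendsto_iff_tendstoUniformly.1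
    (tendsto_birkhoffAverage_koopman_addRight hc G)
  have hl : ⇑(haarMean G) = fun _ => ∫ t, G t ∂AddCircle.haarAddCircle :=
    funext (haarMean_apply G)
  simpa [hl, funext (birkhoffAverage_koopman_apply _ _ _)] using h

theorem tendstoUniformly_birkhoffAverage_of_periodic {p b : ℝ} (hp : 0 < p)
    (hb : Irrational (b / p)) {f : ℝ → ℝ} (hf : Continuous f) (hper : Function.Periodic f p) :
    TendstoUniformly (birkhoffAverage ℝ (· + b) f) (fun _ => ⨍ t in 0..p, f t) atTop := by
  have : Fact (0 < p) := ⟨hp⟩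
  have hperℂ : Function.Periodic (fun t => (f t : ℂ)) p := fun t => by simp only [hper t]
  let G : C(AddCircle p, ℂ) :=
    ⟨hperℂ.lift, continuous_coinduced_dom.2 (Complex.continuous_ofReal.comp hf)⟩
  have hG (t : ℝ) : G t = f t := rfl
  have horder : ¬ IsOfFinAddOrder (b : AddCircle p) :=
    AddCircle.not_isOfFinAddOrder_iff_forall_rat_ne_div.2 fun q hq => hb ⟨q, hq⟩
  have hsum (n : ℕ) (x : ℝ) :
      birkhoffAverage ℂ (· + (b : AddCircle p)) G n x = birkhoffAverage ℝ (· + b) f n x := by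
    have hcoe (i : ℕ) : (x : AddCircle p) + i • (b : AddCircle p) = (x + i • b : ℝ) := by simp
    simp only [birkhoffAverage, birkhoffSum, add_right_iterate_apply, hcoe, hG]
    simp
  have hint : ∫ t, G t ∂AddCircle.haarAddCircle = ((⨍ t in 0..p, f t : ℝ) : ℂ) := by
    rw [AddCircle.integral_haarAddCircle, ← AddCircle.intervalIntegral_preimage p 0]
    simp [hG, interval_average_eq, intervalIntegral.integral_ofReal]
  have hweyl := Metric.tendstoUniformly_iff.1 (tendstoUniformly_birkhoffAverage_addRight horder G)
  refine Metric.tendstoUniformly_iff.2 fun ε hε => (hweyl ε hε).mono fun n hn x => ?_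
  simpa only [hint, hsum, Complex.dist_eq, ← Complex.ofReal_sub,
    Complex.norm_real, ← dist_eq_norm] using hn x

end IrrationalRotation

section SubadditiveCocycle

variable {X : Type*} {T : X → X} {f : ℕ → X → ℝ}

/-- A subadditive cocycle over the dynamical system `T`, as in Kingman's ergodic theorem. -/
def IsSubadditiveCocycle (T : X → X) (f : ℕ → X → ℝ) : Prop :=
  ∀ m n x, f (m + n) x ≤ f m (T^[n] x) + f n x

namespace IsSubadditiveCocycle

lemma apply_add_mul_le (hf : IsSubadditiveCocycle T f) (r q m : ℕ) (x : X) :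
    f (r + q * m) x ≤ f r (T^[q * m] x) + birkhoffSum T^[m] (f m) q x := by
  induction q generalizing x with
  | zero => simp
  | succ q ih =>
    calc f (r + (q + 1) * m) x = f (r + q * m + m) x := by rw [Nat.succ_mul, add_assoc]
      _ ≤ f (r + q * m) (T^[m] x) + f m x := hf _ _ _
      _ ≤ f r (T^[q * m] (T^[m] x)) + birkhoffSum T^[m] (f m) q (T^[m] x) + f m x := by
        gcongr; exact ih _
      _ = f r (T^[(q + 1) * m] x) + birkhoffSum T^[m] (f m) (q + 1) x := by
        rw [← Function.iterate_add_apply, ← Nat.succ_mul, birkhoffSum_succ']; ring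

theorem eventually_forall_lt_mul (hf : IsSubadditiveCocycle T f) {m : ℕ} (hm : 0 < m)
    (hbdd : ∀ r < m, BddAbove (Set.range (f r))) {a c : ℝ}
    (havg : ∀ᶠ q in atTop, ∀ x, birkhoffAverage ℝ T^[m] (f m) q x ≤ m * a) (hac : a < c) :
    ∀ᶠ n : ℕ in atTop, ∀ x, f n x < n * c := by
  obtain ⟨D, hD⟩ : ∃ D, ∀ r < m, ∀ x, f r x - r * a ≤ D := by
    have hshift (r : ℕ) (hr : r ∈ Set.Iio m) : BddAbove (Set.range fun x => f r x - r * a) := by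
      obtain ⟨C, hC⟩ := hbdd r hr
      exact ⟨C - r * a, Set.forall_mem_range.2 fun x =>
        sub_le_sub_right (hC (Set.mem_range_self x)) _⟩
    obtain ⟨D, hD⟩ := ((Set.finite_Iio m).bddAbove_biUnion).2 hshift
    exact ⟨D, fun r hr x => hD (Set.mem_biUnion hr (Set.mem_range_self x))⟩
  have hlinear : ∀ᶠ n : ℕ in atTop, D < n * (c - a) :=
    (tendsto_natCast_atTop_atTop.atTop_mul_const (sub_pos.2 hac)).eventually_gt_atTop D
  filter_upwards [(Nat.tendsto_div_const_atTop hm.ne').eventually havg, hlinear] with n hq hn x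
  have hdiv : n % m + n / m * m = n := Nat.mod_add_div' n m
  have hsum : birkhoffSum T^[m] (f m) (n / m) x ≤ (n / m : ℕ) * (m * a) := by
    rcases (n / m).eq_zero_or_pos with h0 | hpos
    · simp [h0]
    · rw [← inv_mul_le_iff₀ (by exact_mod_cast hpos)]
      exact hq x
  calc f n x = f (n % m + n / m * m) x := by rw [hdiv]
    _ ≤ f (n % m) (T^[n / m * m] x) + birkhoffSum T^[m] (f m) (n / m) x :=
      hf.apply_add_mul_le ..
    _ ≤ (D + (n % m : ℕ) * a) + (n / m : ℕ) * (m * a) := by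
      gcongr; linarith [hD _ (Nat.mod_lt n hm) (T^[n / m * m] x)]
    _ = D + ((n % m + n / m * m : ℕ) : ℝ) * a := by push_cast; ring
    _ = D + n * a := by rw [hdiv]
    _ < n * c := by linarith

theorem eventually_forall_lt_mul_of_intervalAverage_lt {f : ℕ → ℝ → ℝ} {p b : ℝ}
    (hf : IsSubadditiveCocycle (· + b) f) (hp : 0 < p) (hb : Irrational (b / p))
    (hcont : ∀ n, Continuous (f n)) (hper : ∀ n, Function.Periodic (f n) p) {m : ℕ} (hm : 0 < m)
    {c : ℝ} (hc : ⨍ t in 0..p, f m t < m * c) :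
    ∀ᶠ n : ℕ in atTop, ∀ x, f n x < n * c := by
  obtain ⟨a, hca, hac⟩ := exists_between ((div_lt_iff₀' (Nat.cast_pos.2 hm)).2 hc)
  have hiter : (· + b)^[m] = (· + m • b) := add_right_iterate b m
  have hirr : Irrational (m • b / p) := by
    rw [nsmul_eq_mul, mul_div_assoc]
    exact hb.natCast_mul hm.ne'
  have hweyl := Metric.tendstoUniformly_iff.1
    (tendstoUniformly_birkhoffAverage_of_periodic hp hirr (hcont m) (hper m))
    (m * a - ⨍ t in 0..p, f m t) (sub_pos.2 ((div_lt_iff₀' (Nat.cast_pos.2 hm)).1 hca))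
  refine hf.eventually_forall_lt_mul hm (fun r _ => ?_) (hweyl.mono fun q hq x => ?_) hac
  · exact ((hper r).isBounded_of_continuous hp.ne' (hcont r)).bddAbove
  · rw [hiter]
    have hclose := hq x
    rw [dist_comm, Real.dist_eq] at hclose
    linarith [le_abs_self (birkhoffAverage ℝ (· + m • b) (f m) q x - ⨍ t in 0..p, f m t)]

end IsSubadditiveCocycle

end SubadditiveCocycle

section TransferMatrix

open scoped Matrix Matrix.Norms.L2Operator

lemma norm_entry_le_l2_opNorm {𝕜 m n : Type*} [RCLike 𝕜] [Fintype m] [Fintype n]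
    [DecidableEq n] (M : Matrix m n 𝕜) (i : m) (j : n) : ‖M i j‖ ≤ ‖M‖ := by
  calc ‖M i j‖ = ‖WithLp.toLp 2 (M *ᵥ EuclideanSpace.single j (1 : 𝕜)) i‖ := by simp
    _ ≤ ‖WithLp.toLp 2 (M *ᵥ EuclideanSpace.single j (1 : 𝕜))‖ := PiLp.norm_apply_le _ i
    _ ≤ ‖M‖ * ‖EuclideanSpace.single j (1 : 𝕜)‖ := M.l2_opNorm_mulVec (EuclideanSpace.single j 1)
    _ = ‖M‖ := by simp

lemma opNorm2_eq_norm (M : Matrix (Fin 2) (Fin 2) ℂ) : opNorm2 M = ‖M‖ := rfl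

lemma opNorm2_mul_le (M N : Matrix (Fin 2) (Fin 2) ℂ) :
    opNorm2 (M * N) ≤ opNorm2 M * opNorm2 N := by
  simpa only [opNorm2_eq_norm] using norm_mul_le M N

lemma continuous_opNorm2 : Continuous opNorm2 :=
  continuous_norm.congr fun M => (opNorm2_eq_norm M).symm

variable (V : ℝ → ℝ) (b : ℝ)

lemma tProd_zero (x : ℝ) (z : ℂ) : tProd V b 0 x z = 1 := rfl

lemma tProd_succ_left (n : ℕ) (x : ℝ) (z : ℂ) :
    tProd V b (n + 1) x z = tMat V (x + n * b) z * tProd V b n x z := by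
  simp [tProd, List.range_succ]

lemma tProd_add (m n : ℕ) (x : ℝ) (z : ℂ) :
    tProd V b (m + n) x z = tProd V b m (x + n * b) z * tProd V b n x z := by
  induction m with
  | zero => simp [tProd_zero]
  | succ m ih =>
    have hshift : x + (m + n : ℕ) * b = x + n * b + m * b := by push_cast; ring
    rw [add_right_comm, tProd_succ_left, ih, tProd_succ_left, mul_assoc, hshift]

lemma tProd_succ_right (n : ℕ) (x : ℝ) (z : ℂ) :
    tProd V b (n + 1) x z = tProd V b n (x + b) z * tMat V x z := by
  have hone : tProd V b 1 x z = tMat V x z := by simp [tProd]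
  rw [tProd_add, hone, Nat.cast_one, one_mul]

lemma det_tProd (n : ℕ) (x : ℝ) (z : ℂ) : (tProd V b n x z).det = 1 := by
  induction n with
  | zero => rw [tProd_zero, Matrix.det_one]
  | succ n ih => rw [tProd_succ_left, Matrix.det_mul, ih]; simp [tMat, Matrix.det_fin_two]

lemma opNorm2_tProd_pos (n : ℕ) (x : ℝ) (z : ℂ) :
    0 < opNorm2 (tProd V b n x z) := by
  have hne : tProd V b n x z ≠ 0 := fun h0 => by simpa [h0] using det_tProd V b n x z
  simpa only [opNorm2_eq_norm, norm_pos_iff] using hne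

lemma isSubadditiveCocycle_log_opNorm2_tProd (z : ℂ) :
    IsSubadditiveCocycle (· + b) fun n x => Real.log (opNorm2 (tProd V b n x z)) := by
  intro m n x
  have hm := opNorm2_tProd_pos V b m (x + n * b) z
  have hn := opNorm2_tProd_pos V b n x z
  rw [add_right_iterate_apply, nsmul_eq_mul, ← Real.log_mul hm.ne' hn.ne']
  refine Real.log_le_log (opNorm2_tProd_pos V b (m + n) x z) ?_
  exact tProd_add V b m n x z ▸ opNorm2_mul_le _ _

variable {V}

lemma continuous_tProd (hV : Continuous V) (n : ℕ) (z : ℂ) :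
    Continuous fun x => tProd V b n x z := by
  induction n with
  | zero => exact continuous_const
  | succ n ih =>
    have hstep : Continuous fun x => tMat V (x + n * b) z :=
      continuous_matrix fun i j => by fin_cases i <;> fin_cases j <;> unfold tMat <;> fun_prop
    exact (hstep.mul ih).congr fun x => (tProd_succ_left V b n x z).symm

lemma periodic_tProd {p : ℝ} (hV : Function.Periodic V p) (n : ℕ) (z : ℂ) :
    Function.Periodic (fun x => tProd V b n x z) p := fun x => by
  simp [tProd, tMat, add_right_comm x p, hV _]

variable {b} in
theorem eventually_forall_log_opNorm2_tProd_lt (hV : Continuous V) (hper : Function.Periodic V 1)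
    (hb : Irrational b) {z : ℂ} {c : ℝ} (hc : lyap V b z < c) :
    ∀ᶠ n : ℕ in atTop, ∀ x, Real.log (opNorm2 (tProd V b n x z)) < n * c := by
  obtain ⟨m, hm⟩ := exists_lt_of_ciInf_lt hc
  have hcocycle := isSubadditiveCocycle_log_opNorm2_tProd V b z
  refine hcocycle.eventually_forall_lt_mul_of_intervalAverage_lt one_pos (by rwa [div_one])
    (fun n => ?_) (fun n x => ?_) m.pos ?_
  · exact (continuous_opNorm2.comp (continuous_tProd b hV n z)).log
      fun x => (opNorm2_tProd_pos V b n x z).ne'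
  · exact congrArg (Real.log <| opNorm2 ·) (periodic_tProd b hper n z x)
  · rw [interval_average_eq, sub_zero, inv_one, one_smul]
    exact (inv_mul_lt_iff₀ (Nat.cast_pos.2 m.pos)).1 hm

end TransferMatrix

section Determinant

lemma det_eq_sub_of_tridiagonal_border {R : Type*} [CommRing R] {k : ℕ}
    (M : Matrix (Fin (k + 2)) (Fin (k + 2)) R) (hrow : ∀ j : Fin k, M 0 j.succ.succ = 0)
    (hcol : ∀ i : Fin k, M i.succ.succ 0 = 0) :
    M.det = M 0 0 * (M.submatrix Fin.succ Fin.succ).det -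
      M 0 1 * M 1 0 * ((M.submatrix Fin.succ Fin.succ).submatrix Fin.succ Fin.succ).det := by
  have hminor : (M.submatrix Fin.succ (Fin.succAbove 1)).det =
      M 1 0 * ((M.submatrix Fin.succ Fin.succ).submatrix Fin.succ Fin.succ).det := by
    have hskip : Fin.succAbove (1 : Fin (k + 2)) ∘ Fin.succ = Fin.succ ∘ Fin.succ :=
      funext fun j => by rw [← Fin.succ_zero_eq_one]; simp
    rw [Matrix.det_succ_column_zero, Fin.sum_univ_succ]
    simp [hcol, hskip, Function.comp_def]
  have hexpand : M.det = M 0 0 * (M.submatrix Fin.succ Fin.succ).det -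
      M 0 1 * (M.submatrix Fin.succ (Fin.succAbove 1)).det := by
    simp [Matrix.det_succ_row_zero M, Fin.sum_univ_succ, hrow, sub_eq_add_neg]
  rw [hexpand, hminor, mul_assoc]

variable (V : ℝ → ℝ) (b : ℝ)

lemma Pmat_apply_eq_zero {k : ℕ} (x E : ℝ) {i j : Fin k}
    (hij : (i : ℕ) + 1 < j ∨ (j : ℕ) + 1 < i) : Pmat V b k x E i j = 0 := by
  rw [Pmat, if_neg (by omega), if_neg (by omega)]

lemma Pmat_submatrix_succ (k : ℕ) (x E : ℝ) :
    (Pmat V b (k + 1) x E).submatrix Fin.succ Fin.succ = Pmat V b k (x + b) E := by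
  ext i j
  have hdiag : x + ((i : ℝ) + 1) * b = x + b + i * b := by ring
  simp only [Matrix.submatrix_apply, Pmat, Fin.succ_inj, Fin.val_succ, Nat.cast_add, Nat.cast_one,
    hdiag, add_left_inj]

lemma Pdet_zero (x E : ℝ) : Pdet V b 0 x E = 1 := Matrix.det_isEmpty

lemma Pdet_one (x E : ℝ) : Pdet V b 1 x E = E - V x := by simp [Pdet, Pmat]

lemma Pdet_add_two (k : ℕ) (x E : ℝ) :
    Pdet V b (k + 2) x E =
      (E - V x) * Pdet V b (k + 1) (x + b) E - Pdet V b k (x + b + b) E := by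
  have hdet := det_eq_sub_of_tridiagonal_border (Pmat V b (k + 2) x E)
    (fun j => Pmat_apply_eq_zero V b x E (.inl (by simp)))
    (fun i => Pmat_apply_eq_zero V b x E (.inr (by simp)))
  rw [Pmat_submatrix_succ, Pmat_submatrix_succ] at hdet
  simpa [Pdet, Pmat] using hdet

lemma tProd_apply_zero_zero (k : ℕ) (x E : ℝ) : tProd V b k x E 0 0 = Pdet V b k x E := by
  induction k using Nat.twoStepInduction generalizing x with
  | zero => simp [tProd_zero, Pdet_zero]
  | one => simp [tProd_succ_right, tProd_zero, tMat, Pdet_one]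
  | more k ih₀ ih₁ =>
    have hcorner : tProd V b (k + 1) (x + b) E 0 1 = -tProd V b k (x + b + b) E 0 0 := by
      simp [tProd_succ_right, Matrix.mul_apply, tMat]
    calc tProd V b (k + 2) x E 0 0
        = tProd V b (k + 1) (x + b) E 0 0 * (E - V x) + tProd V b (k + 1) (x + b) E 0 1 := by
          simp [tProd_succ_right V b (k + 1), Matrix.mul_apply, tMat]
      _ = Pdet V b (k + 2) x E := by
          rw [hcorner, ih₀, ih₁, Pdet_add_two]; push_cast; ring

lemma abs_Pdet_le_opNorm2_tProd (k : ℕ) (x E : ℝ) :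
    |Pdet V b k x E| ≤ opNorm2 (tProd V b k x E) := by
  rw [← Real.norm_eq_abs, ← Complex.norm_real, ← tProd_apply_zero_zero]
  exact norm_entry_le_l2_opNorm _ 0 0

end Determinant

lemma periodic_potV (α lam : ℝ) : Function.Periodic (potV α lam) 1 := fun x => by
  simp only [potV, mul_add, mul_one, Real.cos_add_two_pi]

lemma continuous_potV {α : ℝ} (hα : α ∈ Set.Ioo (-1 : ℝ) 1) (lam : ℝ) :
    Continuous (potV α lam) := by
  refine Continuous.div (by fun_prop) (by fun_prop) fun x => (sub_pos.2 ?_).ne'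
  calc α * Real.cos (2 * π * x) ≤ |α| * |Real.cos (2 * π * x)| := by
        rw [← abs_mul]; exact le_abs_self _
    _ ≤ |α| := mul_le_of_le_one_right (abs_nonneg α) (Real.abs_cos_le_one _)
    _ < 1 := abs_lt.2 hα

theorem Pdet_upper_bound_general {V : ℝ → ℝ} (hV : Continuous V) (hper : Function.Periodic V 1)
    {b : ℝ} (hb : Irrational b) (E : ℝ) {ε : ℝ} (hε : 0 < ε) :
    ∃ K : ℕ, ∀ k : ℕ, K < k → ∀ x : ℝ,
      |Pdet V b k x E| < Real.exp ((lyap V b (E : ℂ) + ε) * (k : ℝ)) := by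
  obtain ⟨K, hK⟩ := eventually_atTop.1 <|
    eventually_forall_log_opNorm2_tProd_lt hV hper hb (lt_add_of_pos_right (lyap V b E) hε)
  refine ⟨K, fun k hk x => (abs_Pdet_le_opNorm2_tProd V b k x E).trans_lt ?_⟩
  rw [← Real.log_lt_iff_lt_exp (opNorm2_tProd_pos V b k x E), mul_comm]
  exact hK k hk.le x

/-- for every `E` and `ε > 0` there is `K` such that for every `k > K` and
every `x`, `|P_k(x,E)| < e^{(L(E)+ε)k}`. -/
theorem Pdet_upper_bound (α lam b : ℝ) (hα : α ∈ Set.Ioo (-1 : ℝ) 1)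
    (hb : Irrational b) (E : ℝ) (ε : ℝ) (hε : 0 < ε) :
    ∃ K : ℕ, ∀ k : ℕ, K < k → ∀ x : ℝ,
      |Pdet (potV α lam) b k x E| <
        Real.exp ((lyap (potV α lam) b (E : ℂ) + ε) * (k : ℝ)) := by
  exact Pdet_upper_bound_general (continuous_potV hα lam) (periodic_potV α lam) hb E hε
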